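/- Let N ≥ 1 and for each i ∈ {1,…,N} let B_i : ℝ → ℝ be strictly convex, positively p_i-homogeneous with p_i > 1, and differentiable, with b_i(s) = (1/p_i)·B_i'(s). Let r be real with 1 ≤ r ≤ p_i for all i, and let s > 0 and ξ₁, ξ₂ : Fin N → ℝ. Then ∑_{i=1}^N [ b_i(ξ₁(i))·(ξ₁(i) − r·s^(1−r)·ξ₂(i) + (r−1)·s^(−r)·ξ₁(i)) + b_i(ξ₂(i))·(ξ₂(i) − r·s^(r−1)·ξ₁(i) + (r−1)·s^r·ξ₂(i)) ] ≥ 0. (Pointwise form of the anisotropic Diaz–Saa inequality.) -/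

import Mathlib

open Real

/-!
If `f` is a subgradient at `u` of a positively `p`-homogeneous function `B`, then Euler's identity
gives `f u = p B(u)`, and the subgradient inequality at `t w`, optimized over `t > 0`, gives the
Hölder inequality `f w ≤ p B(u)^(1 - 1/p) B(w)^(1/p)`. Only the two cross terms of the Diaz–Saa
expression have a negative sign; Hölder and weighted AM–GM bound the one containing `f w` by
`(r - 1) s^(-r) B(u) + B(u)^(1 - r/p) B(w)^(r/p)`, and symmetrically for the other. The terms in `s`
cancel against those of the expression, and the two remaining mixed products add up to at most
`B(u) + B(w)`, again by AM–GM. For `r = 1` the inequality is the monotonicity of subgradients.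
-/

section PowerInequalities

variable {a b p r s θ x : ℝ}

theorem rpow_mul_rpow_add_swap_le (ha : 0 ≤ a) (hb : 0 ≤ b) (hθ₀ : 0 ≤ θ) (hθ₁ : θ ≤ 1) :
    a ^ (1 - θ) * b ^ θ + b ^ (1 - θ) * a ^ θ ≤ a + b := by
  have h := geom_mean_le_arith_mean2_weighted (sub_nonneg.2 hθ₁) hθ₀ ha hb (by ring)
  have h' := geom_mean_le_arith_mean2_weighted (sub_nonneg.2 hθ₁) hθ₀ hb ha (by ring)
  linarith

theorem mul_rpow_mul_rpow_mul_rpow_le (hr : 1 ≤ r) (hrp : r ≤ p) (hs : 0 < s) (ha : 0 ≤ a)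
    (hb : 0 ≤ b) :
    r * s ^ (1 - r) * (a ^ (1 - p⁻¹) * b ^ p⁻¹) ≤
      (r - 1) * s ^ (-r) * a + a ^ (1 - r / p) * b ^ (r / p) := by
  have hr₀ : 0 < r := one_pos.trans_le hr
  have hp₀ : 0 < p := hr₀.trans_le hrp
  have hr₁ : 0 ≤ 1 - r⁻¹ := sub_nonneg.2 (inv_le_one_of_one_le₀ hr)
  have hpr : 0 ≤ r⁻¹ - p⁻¹ := sub_nonneg.2 (inv_anti₀ hr₀ hrp)
  have geom_mean_eq : (s ^ (-r) * a) ^ (1 - r⁻¹) * (a ^ (1 - r / p) * b ^ (r / p)) ^ r⁻¹ =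
      s ^ (1 - r) * (a ^ (1 - p⁻¹) * b ^ p⁻¹) := by
    have hs_exp : -r * (1 - r⁻¹) = 1 - r := by field_simp; ring
    have ha_exp : (1 - r / p) * r⁻¹ = r⁻¹ - p⁻¹ := by field_simp
    have hb_exp : r / p * r⁻¹ = p⁻¹ := by field_simp
    rw [mul_rpow (by positivity) ha, mul_rpow (by positivity) (by positivity), ← rpow_mul hs.le,
      ← rpow_mul ha, ← rpow_mul hb, hs_exp, ha_exp, hb_exp, ← sub_add_sub_cancel 1 r⁻¹ p⁻¹,
      rpow_add_of_nonneg ha hr₁ hpr]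
    ring
  calc r * s ^ (1 - r) * (a ^ (1 - p⁻¹) * b ^ p⁻¹)
      = r * ((s ^ (-r) * a) ^ (1 - r⁻¹) * (a ^ (1 - r / p) * b ^ (r / p)) ^ r⁻¹) := by
        rw [geom_mean_eq, mul_assoc]
    _ ≤ r * ((1 - r⁻¹) * (s ^ (-r) * a) + r⁻¹ * (a ^ (1 - r / p) * b ^ (r / p))) := by
        gcongr
        exact geom_mean_le_arith_mean2_weighted hr₁ (by positivity) (by positivity)
          (by positivity) (by ring)
    _ = (r - 1) * s ^ (-r) * a + a ^ (1 - r / p) * b ^ (r / p) := by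
        field_simp

theorem le_mul_rpow_mul_rpow_of_forall_mul_le_of_pos (hp : 0 < p) (ha : 0 < a) (hb : 0 < b)
    (h : ∀ t, 0 < t → t * x ≤ (p - 1) * a + t ^ p * b) :
    x ≤ p * (a ^ (1 - p⁻¹) * b ^ p⁻¹) := by
  -- This `t` minimizes the bound `((p - 1) * a + t ^ p * b) / t` on `x` supplied by `h`.
  have optimal : (a / b) ^ p⁻¹ * x ≤ p * a := by
    have := h ((a / b) ^ p⁻¹) (by positivity)
    rw [rpow_inv_rpow (by positivity) hp.ne', div_mul_cancel₀ a hb.ne'] at this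
    linarith
  calc x ≤ p * a / (a / b) ^ p⁻¹ := (le_div_iff₀' (by positivity)).2 optimal
    _ = p * (a ^ (1 - p⁻¹) * b ^ p⁻¹) := by
      rw [div_rpow ha.le hb.le, rpow_sub ha, rpow_one]
      field_simp

theorem le_mul_rpow_mul_rpow_of_forall_mul_le (hp : 1 ≤ p) (ha : 0 ≤ a) (hb : 0 ≤ b)
    (h : ∀ t, 0 < t → t * x ≤ (p - 1) * a + t ^ p * b) :
    x ≤ p * (a ^ (1 - p⁻¹) * b ^ p⁻¹) := by
  have hp₀ : 0 < p := one_pos.trans_le hp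
  have perturbed : ∀ ε > 0, x ≤ p * ((a + ε) ^ (1 - p⁻¹) * (b + ε) ^ p⁻¹) := fun ε hε ↦
    le_mul_rpow_mul_rpow_of_forall_mul_le_of_pos hp₀ (by positivity) (by positivity) fun t ht ↦
      (h t ht).trans <| by
        have : 0 ≤ p - 1 := sub_nonneg.2 hp
        gcongr <;> linarith
  have cont : Continuous fun ε ↦ p * ((a + ε) ^ (1 - p⁻¹) * (b + ε) ^ p⁻¹) :=
    continuous_const.mul <|
      ((continuous_rpow_const (sub_nonneg.2 (inv_le_one_of_one_le₀ hp))).comp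
        (continuous_const_add a)).mul
      ((continuous_rpow_const (inv_nonneg.2 hp₀.le)).comp (continuous_const_add b))
  simpa using ge_of_tendsto (cont.continuousWithinAt (s := Set.Ioi 0) (x := 0))
    (eventually_mem_nhdsWithin.mono perturbed)

end PowerInequalities

section Subgradients

variable {E : Type*} [AddCommGroup E] [Module ℝ E]

/-- Positive `p`-homogeneity of a real function on a real vector space. The scalar `t = 0` is
included, so that `B 0 = 0` when `p ≠ 0`. -/
def IsPosHomogeneous (p : ℝ) (B : E → ℝ) : Prop :=
  ∀ t : ℝ, 0 ≤ t → ∀ x, B (t • x) = t ^ p * B x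

/-- `f` is a subgradient of `B` at `x`, in the sense of convex analysis. It plays the role of the
derivative of `B` at `x`; neither convexity of `B` nor continuity of `f` is part of the notion. -/
def IsSubgradientAt (B : E → ℝ) (f : E →ₗ[ℝ] ℝ) (x : E) : Prop :=
  ∀ z, B x + f (z - x) ≤ B z

variable {B : E → ℝ} {f g : E →ₗ[ℝ] ℝ} {u w : E} {p r s : ℝ}

theorem IsPosHomogeneous.map_zero (hB : IsPosHomogeneous p B) (hp : p ≠ 0) : B 0 = 0 := by
  simpa [zero_rpow hp] using hB 0 le_rfl 0

namespace IsSubgradientAt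

theorem apply_sub_add_apply_sub_nonneg (hf : IsSubgradientAt B f u) (hg : IsSubgradientAt B g w) :
    0 ≤ f (u - w) + g (w - u) := by
  have hfw := hf w
  have hgu := hg u
  rw [← neg_sub, map_neg] at hfw hgu
  linarith

theorem apply_self (hf : IsSubgradientAt B f u) (hB : IsPosHomogeneous p B) : f u = p * B u := by
  have isLocalMin : IsLocalMin (fun t : ℝ ↦ t ^ p * B u - t * f u) 1 := by
    filter_upwards [lt_mem_nhds one_pos] with t ht
    have := hf (t • u)
    rw [hB t ht.le, map_sub, map_smul, smul_eq_mul] at this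
    rw [one_rpow]
    linarith
  have hasDerivAt : HasDerivAt (fun t : ℝ ↦ t ^ p * B u - t * f u) (p * B u - f u) 1 := by
    simpa using ((hasDerivAt_rpow_const (p := p) (.inl one_ne_zero)).mul_const (B u)).fun_sub
      ((hasDerivAt_id (1 : ℝ)).mul_const (f u))
  linarith [isLocalMin.hasDerivAt_eq_zero hasDerivAt]

theorem nonneg (hf : IsSubgradientAt B f u) (hB : IsPosHomogeneous p B) (hp : 1 < p) :
    0 ≤ B u := by
  have h := hf 0
  rw [zero_sub, map_neg, hf.apply_self hB, hB.map_zero (by positivity)] at h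
  exact nonneg_of_mul_nonneg_right (by linarith : 0 ≤ (p - 1) * B u) (sub_pos.2 hp)

theorem mul_apply_le (hf : IsSubgradientAt B f u) (hB : IsPosHomogeneous p B) (w : E) {t : ℝ}
    (ht : 0 ≤ t) : t * f w ≤ (p - 1) * B u + t ^ p * B w := by
  have h := hf (t • w)
  rw [hB t ht, map_sub, map_smul, smul_eq_mul, hf.apply_self hB] at h
  linarith

theorem apply_le_mul_rpow_mul_rpow (hf : IsSubgradientAt B f u) (hB : IsPosHomogeneous p B)
    (hp : 1 < p) (hw : 0 ≤ B w) : f w ≤ p * (B u ^ (1 - p⁻¹) * B w ^ p⁻¹) :=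
  le_mul_rpow_mul_rpow_of_forall_mul_le hp.le (hf.nonneg hB hp) hw
    fun _ ht ↦ hf.mul_apply_le hB w ht.le

theorem mul_rpow_mul_apply_le (hf : IsSubgradientAt B f u) (hB : IsPosHomogeneous p B)
    (hp : 1 < p) (hw : 0 ≤ B w) (hr : 1 ≤ r) (hrp : r ≤ p) (hs : 0 < s) :
    r * s ^ (1 - r) * (1 / p * f w) ≤
      (r - 1) * s ^ (-r) * B u + B u ^ (1 - r / p) * B w ^ (r / p) := by
  have holder : 1 / p * f w ≤ B u ^ (1 - p⁻¹) * B w ^ p⁻¹ := by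
    rw [one_div, inv_mul_le_iff₀ (by positivity)]
    exact hf.apply_le_mul_rpow_mul_rpow hB hp hw
  calc r * s ^ (1 - r) * (1 / p * f w)
      ≤ r * s ^ (1 - r) * (B u ^ (1 - p⁻¹) * B w ^ p⁻¹) := by gcongr
    _ ≤ _ := mul_rpow_mul_rpow_mul_rpow_le hr hrp hs (hf.nonneg hB hp) hw

theorem diaz_saa (hf : IsSubgradientAt B f u) (hg : IsSubgradientAt B g w)
    (hB : IsPosHomogeneous p B) (hr : 1 ≤ r) (hrp : r ≤ p) (hs : 0 < s) :
    0 ≤ 1 / p * f (u - (r * s ^ (1 - r)) • w + ((r - 1) * s ^ (-r)) • u) +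
      1 / p * g (w - (r * s ^ (r - 1)) • u + ((r - 1) * s ^ r) • w) := by
  have hp₀ : 0 < p := by linarith
  rcases hr.eq_or_lt with rfl | hr₁
  · simpa [← mul_add] using
      mul_nonneg (inv_nonneg.2 hp₀.le) (hf.apply_sub_add_apply_sub_nonneg hg)
  have hp : 1 < p := hr₁.trans_le hrp
  have hu := hf.nonneg hB hp
  have hw := hg.nonneg hB hp
  have cross_f := hf.mul_rpow_mul_apply_le hB hp hw hr hrp hs
  have cross_g := hg.mul_rpow_mul_apply_le hB hp hu hr hrp (inv_pos.2 hs)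
  rw [← rpow_neg_eq_inv_rpow, ← rpow_neg_eq_inv_rpow, neg_sub, neg_neg] at cross_g
  have mixed := rpow_mul_rpow_add_swap_le hu hw (by positivity) (div_le_one_of_le₀ hrp hp₀.le)
  have euler_f : 1 / p * f u = B u := by rw [hf.apply_self hB]; field_simp
  have euler_g : 1 / p * g w = B w := by rw [hg.apply_self hB]; field_simp
  simp only [map_add, map_sub, map_smul, smul_eq_mul]
  linear_combination cross_f + cross_g + mixed - (1 + (r - 1) * s ^ (-r)) * euler_f -
    (1 + (r - 1) * s ^ r) * euler_g

end IsSubgradientAt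

end Subgradients

theorem isSubgradientAt_of_convexOn_of_hasFDerivAt {E : Type*} [NormedAddCommGroup E]
    [NormedSpace ℝ E] {B : E → ℝ} {B' : E →L[ℝ] ℝ} {x : E} (hconv : ConvexOn ℝ Set.univ B)
    (hderiv : HasFDerivAt B B' x) : IsSubgradientAt B B' x := fun z ↦ by
  have line_convex : ConvexOn ℝ Set.univ (B ∘ AffineMap.lineMap x z) :=
    hconv.comp_affineMap (AffineMap.lineMap x z)
  have line_deriv : HasDerivAt (B ∘ AffineMap.lineMap x z) (B' (z - x)) (0 : ℝ) :=
    HasFDerivAt.comp_hasDerivAt 0 (by simpa using hderiv) AffineMap.hasDerivAt_lineMap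
  have := line_convex.le_slope_of_hasDerivAt (Set.mem_univ 0) (Set.mem_univ 1) one_pos line_deriv
  simp only [slope_def_field, Function.comp_apply, AffineMap.lineMap_apply_one,
    AffineMap.lineMap_apply_zero, sub_zero, div_one] at this
  exact add_le_of_le_sub_left this

theorem diaz_saa_anisotropic_pointwise_general {ι : Type*} [Fintype ι] {E : ι → Type*}
    [∀ i, AddCommGroup (E i)] [∀ i, Module ℝ (E i)] {p : ι → ℝ} {B : ∀ i, E i → ℝ}
    (hhom : ∀ i, IsPosHomogeneous (p i) (B i)) {ξ₁ ξ₂ : ∀ i, E i} {f g : ∀ i, E i →ₗ[ℝ] ℝ}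
    (hf : ∀ i, IsSubgradientAt (B i) (f i) (ξ₁ i)) (hg : ∀ i, IsSubgradientAt (B i) (g i) (ξ₂ i))
    {r : ℝ} (hr : 1 ≤ r) (hrp : ∀ i, r ≤ p i) {s : ℝ} (hs : 0 < s) :
    0 ≤ ∑ i,
      (1 / p i * f i (ξ₁ i - (r * s ^ (1 - r)) • ξ₂ i + ((r - 1) * s ^ (-r)) • ξ₁ i) +
        1 / p i * g i (ξ₂ i - (r * s ^ (r - 1)) • ξ₁ i + ((r - 1) * s ^ r) • ξ₂ i)) :=
  Finset.sum_nonneg fun i _ ↦ (hf i).diaz_saa (hg i) (hhom i) hr (hrp i) hs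

theorem diaz_saa_anisotropic_pointwise
    (N : ℕ) (hN : 1 ≤ N) (p : Fin N → ℝ) (hp : ∀ i, 1 < p i)
    (B : Fin N → ℝ → ℝ)
    (hconv : ∀ i, StrictConvexOn ℝ Set.univ (B i))
    (hhom : ∀ i, ∀ t : ℝ, 0 ≤ t → ∀ s : ℝ, B i (t * s) = t ^ (p i) * B i s)
    (hdiff : ∀ i, Differentiable ℝ (B i))
    (r : ℝ) (hr : 1 ≤ r) (hrp : ∀ i, r ≤ p i)
    (s : ℝ) (hs : 0 < s) (ξ₁ ξ₂ : Fin N → ℝ) :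
    0 ≤ ∑ i : Fin N,
      ((1 / p i) * deriv (B i) (ξ₁ i) *
          (ξ₁ i - r * s ^ (1 - r) * ξ₂ i + (r - 1) * s ^ (-r) * ξ₁ i)
        + (1 / p i) * deriv (B i) (ξ₂ i) *
          (ξ₂ i - r * s ^ (r - 1) * ξ₁ i + (r - 1) * s ^ r * ξ₂ i)) := by
  have subgrad (ξ : Fin N → ℝ) (i : Fin N) : IsSubgradientAt (B i) (fderiv ℝ (B i) (ξ i)) (ξ i) :=
    isSubgradientAt_of_convexOn_of_hasFDerivAt (hconv i).convexOn (hdiff i (ξ i)).hasFDerivAt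
  simpa only [ContinuousLinearMap.coe_coe, fderiv_eq_smul_deriv, smul_eq_mul, mul_assoc,
    mul_comm (deriv _ _)] using
    diaz_saa_anisotropic_pointwise_general hhom (subgrad ξ₁) (subgrad ξ₂) hr hrp hs
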